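/- Let G be a port-labeled graph and let n̂ be the number of equivalence classes of the relation 'having equal views' (u ∼ v iff V(u) = V(v)) on the nodes of G. For any nodes u, v of G, if V^{n̂−1}(u) = V^{n̂−1}(v), then V^t(u) = V^t(v) for every t ≥ 0. -/

import Mathlib

/-- A port-labeled graph: a finite connected simple undirected graph in which each
node `v` of degree `deg v` has its incident edges assigned distinct port numbers
`1,…,deg v`.  It is encoded by a fixed-point-free involution on darts: the dart
`(v, i)` (for `i < deg v`, representing port `i+1` at `v`) is matched with the
dart `(u, j)` when the edge with port `i+1` at `v` leads to `u` entering via port `j+1`. -/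
structure PortGraph where
  /-- number of nodes; the nodes are `Fin n` -/
  n : ℕ
  npos : 0 < n
  /-- degree of each node -/
  deg : Fin n → ℕ
  /-- the dart-matching function (only its values on `i < deg v` are relevant) -/
  mtch : Fin n → ℕ → Fin n × ℕ
  mtch_lt : ∀ (v : Fin n) (i : ℕ), i < deg v → (mtch v i).2 < deg (mtch v i).1
  mtch_invol : ∀ (v : Fin n) (i : ℕ), i < deg v →
      mtch (mtch v i).1 (mtch v i).2 = (v, i)
  /-- no self-loops -/
  no_loops : ∀ (v : Fin n) (i : ℕ), i < deg v → (mtch v i).1 ≠ v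
  /-- no multiple edges -/
  no_multi : ∀ (v : Fin n) (i j : ℕ), i < deg v → j < deg v →
      (mtch v i).1 = (mtch v j).1 → i = j
  /-- connectivity -/
  connected : ∀ u v : Fin n,
    Relation.ReflTransGen (fun a b => ∃ i < deg a, (mtch a i).1 = b) u v

/-- Adjacency in a port-labeled graph. -/
def PortGraph.Adj (G : PortGraph) (u v : Fin G.n) : Prop :=
  ∃ i < G.deg u, (G.mtch u i).1 = v

/-- Rooted trees with edges labeled by pairs of port numbers, used as (truncated) views. -/
inductive ViewTree : Type
  | node : List (ℕ × ℕ × ViewTree) → ViewTree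

/-- The truncated view `V^t(v)` at depth `t` from node `v`. -/
def PortGraph.view (G : PortGraph) : ℕ → Fin G.n → ViewTree
  | 0, _ => ViewTree.node []
  | t + 1, v => ViewTree.node <| (List.range (G.deg v)).map fun i =>
      (i + 1, (G.mtch v i).2 + 1, G.view t (G.mtch v i).1)

/-- The equal-views equivalence relation (`u ∼ v` iff `V(u) = V(v)`). -/
def PortGraph.viewSetoid (G : PortGraph) : Setoid (Fin G.n) where
  r u v := ∀ t, G.view t u = G.view t v
  iseqv := ⟨fun _ _ => rfl, fun h t => (h t).symm, fun h h' t => (h t).trans (h' t)⟩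

/-- `n̂`: the number of equivalence classes of the equal-views relation
(the number of nodes of the quotient graph). -/
noncomputable def PortGraph.nhat (G : PortGraph) : ℕ := Nat.card (Quotient G.viewSetoid)

/-- `G.reachIn k u v` means there is a walk of length at most `k` from `u` to `v`,
i.e. the graph distance from `u` to `v` is at most `k`. -/
def PortGraph.reachIn (G : PortGraph) : ℕ → Fin G.n → Fin G.n → Prop
  | 0, u, v => u = v
  | k + 1, u, v => G.reachIn k u v ∨ ∃ w, G.reachIn k u w ∧ G.Adj w v

/-- A port-preserving isomorphism between port-labeled graphs. -/
def IsPortIso (G H : PortGraph) (e : Fin G.n ≃ Fin H.n) : Prop :=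
  (∀ v, H.deg (e v) = G.deg v) ∧
  ∀ (v : Fin G.n) (i : ℕ), i < G.deg v →
    H.mtch (e v) i = (e (G.mtch v i).1, (G.mtch v i).2)

theorem PortGraph.view_succ_iff (G : PortGraph) (t : ℕ) (u v : Fin G.n) :
    G.view (t + 1) u = G.view (t + 1) v ↔ G.deg u = G.deg v ∧ ∀ i < G.deg u,
      (G.mtch u i).2 = (G.mtch v i).2 ∧
        G.view t (G.mtch u i).1 = G.view t (G.mtch v i).1 := by
  simp only [PortGraph.view, ViewTree.node.injEq]
  constructor
  · intro h
    have hd : G.deg u = G.deg v := by simpa using congrArg List.length h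
    refine ⟨hd, fun i hi => ?_⟩
    rw [← hd] at h
    have := (List.map_inj_left.1 h) i (List.mem_range.2 hi)
    simpa using this
  · rintro ⟨hd, h⟩
    rw [← hd]
    refine List.map_inj_left.2 fun i hi => ?_
    have := h i (List.mem_range.1 hi)
    rw [this.1, this.2]

theorem PortGraph.view_pred (G : PortGraph) (t : ℕ) : ∀ (u v : Fin G.n),
    G.view (t + 1) u = G.view (t + 1) v → G.view t u = G.view t v := by
  induction t with
  | zero => intro u v _; rfl
  | succ t ih =>
    intro u v h
    rw [G.view_succ_iff] at h ⊢
    exact ⟨h.1, fun i hi => ⟨(h.2 i hi).1, ih _ _ (h.2 i hi).2⟩⟩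

/-- The depth-`t` partition is already the partition into classes of equal views. -/
def PortGraph.StableAt (G : PortGraph) (t : ℕ) : Prop :=
  ∀ u v : Fin G.n, G.view t u = G.view t v → ∀ s, G.view s u = G.view s v

theorem PortGraph.view_le (G : PortGraph) {s t : ℕ} (hst : s ≤ t) (u v : Fin G.n)
    (h : G.view t u = G.view t v) : G.view s u = G.view s v := by
  induction hst with
  | refl => exact h
  | step _ ih => exact ih (G.view_pred _ _ _ h)

theorem PortGraph.stableAt_of_step (G : PortGraph) (t : ℕ)
    (h : ∀ u v : Fin G.n, G.view t u = G.view t v → G.view (t + 1) u = G.view (t + 1) v) :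
    G.StableAt t := by
  have key : ∀ k, ∀ u v : Fin G.n, G.view t u = G.view t v →
      G.view (t + k) u = G.view (t + k) v := by
    intro k
    induction k with
    | zero => intro u v huv; exact huv
    | succ k ih =>
      intro u v huv
      have h1 := (G.view_succ_iff _ _ _).1 (h u v huv)
      exact (G.view_succ_iff _ _ _).2
        ⟨h1.1, fun i hi => ⟨(h1.2 i hi).1, ih _ _ (h1.2 i hi).2⟩⟩
  intro u v huv s
  exact G.view_le (Nat.le_add_left s t) u v (key s u v huv)

theorem PortGraph.card_lt_of_not_stable (G : PortGraph) (t : ℕ) (h : ¬ G.StableAt t) :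
    (Set.range (G.view t)).ncard < (Set.range (G.view (t + 1))).ncard := by
  have hf : Function.FactorsThrough (G.view t) (G.view (t + 1)) :=
    fun u v huv => G.view_pred t u v huv
  let f := Function.extend (G.view (t + 1)) (G.view t) (fun _ => ViewTree.node [])
  have hfe : ∀ u, f (G.view (t + 1) u) = G.view t u := fun u => hf.extend_apply _ u
  have hr : Set.range (G.view t) = f '' Set.range (G.view (t + 1)) := by
    rw [← Set.range_comp]
    congr 1
    funext u
    exact (hfe u).symm
  have hfin := Set.finite_range (G.view (t + 1))
  rw [hr]
  refine lt_of_le_of_ne (Set.ncard_image_le hfin) fun he => h ?_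
  have hinj := (Set.ncard_image_iff hfin).1 he
  refine G.stableAt_of_step t fun u v huv => ?_
  refine hinj ⟨u, rfl⟩ ⟨v, rfl⟩ ?_
  rw [hfe, hfe, huv]

theorem PortGraph.stable_or_card (G : PortGraph) (t : ℕ) :
    G.StableAt t ∨ t + 2 ≤ (Set.range (G.view (t + 1))).ncard := by
  induction t with
  | zero =>
    by_cases h : G.StableAt 0
    · exact Or.inl h
    · right
      have h1 := G.card_lt_of_not_stable 0 h
      have h2 : 0 < (Set.range (G.view 0)).ncard :=
        (Set.ncard_pos (Set.finite_range _)).2 ⟨_, ⟨⟨0, G.npos⟩, rfl⟩⟩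
      omega
  | succ t ih =>
    by_cases h : G.StableAt (t + 1)
    · exact Or.inl h
    · right
      have h1 := G.card_lt_of_not_stable _ h
      rcases ih with ih | ih
      · exact absurd (fun u v huv => ih u v (G.view_pred t u v huv)) h
      · omega

theorem PortGraph.card_le_nhat (G : PortGraph) (t : ℕ) :
    (Set.range (G.view t)).ncard ≤ G.nhat := by
  let g : Quotient G.viewSetoid → ViewTree := Quotient.lift (G.view t) (fun _ _ h => h t)
  have hr : Set.range (G.view t) = g '' Set.univ := by
    ext x
    constructor
    · rintro ⟨u, rfl⟩
      exact ⟨Quotient.mk _ u, trivial, rfl⟩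
    · rintro ⟨q, _, rfl⟩
      induction q using Quotient.inductionOn with
      | h u => exact ⟨u, rfl⟩
  rw [hr, PortGraph.nhat, ← Set.ncard_univ]
  exact Set.ncard_image_le Set.finite_univ

/-- If the truncated views at depth `n̂ - 1` of two nodes coincide, where
`n̂` is the number of classes of the equal-views relation, then their views coincide. -/
theorem truncated_view_eq_of_depth_nhat (G : PortGraph) (u v : Fin G.n)
    (h : G.view (G.nhat - 1) u = G.view (G.nhat - 1) v) :
    ∀ t : ℕ, G.view t u = G.view t v := by
  rcases G.stable_or_card (G.nhat - 1) with hs | hc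
  · exact hs u v h
  · have := G.card_le_nhat (G.nhat - 1 + 1)
    omega
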